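/- Let m ≥ 2 be an integer. For τ ∈ ℍ and u, v ∈ ℂ with u−v ∉ Λ_τ, define ψ(u,v;τ) = 2πi·∂_τ℘_m(u−v;τ) + m·G₂(τ)·℘_m(u−v;τ) − m·G₂(τ)·(u−v)·℘_{m+1}(u−v;τ) − m·℘_{m+1}(u−v;τ)·℘₁(v−u;τ), where ∂_τ℘_m(z;τ) denotes the complex derivative of the function τ ↦ ℘_m(z;τ) at fixed z. Then for every g = (A B; C D) ∈ SL₂(ℤ): ψ( u/(Cτ+D), v/(Cτ+D); (Aτ+B)/(Cτ+D) ) = (Cτ+D)^{m+2}·ψ(u,v;τ). (This is the modular transformation of weight m+2 of the function ϑ_j(℘_m(z_j−z_s;·)) in the case j = r.) -/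

import Mathlib

open Complex Real

/-- The lattice point `kτ + l` associated to `p = (k, l) ∈ ℤ²`. -/
noncomputable def latticePt (τ : ℂ) (p : ℤ × ℤ) : ℂ := (p.1 : ℂ) * τ + (p.2 : ℂ)

/-- The Weierstrass function `℘₁(z;τ)`. -/
noncomputable def wp1 (z τ : ℂ) : ℂ :=
  1 / z + ∑' p : {p : ℤ × ℤ // p ≠ (0, 0)},
    (1 / (z - latticePt τ p.1) + 1 / latticePt τ p.1 + z / (latticePt τ p.1) ^ 2)

/-- The Weierstrass function `℘₂(z;τ)`. -/
noncomputable def wp2 (z τ : ℂ) : ℂ :=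
  1 / z ^ 2 + ∑' p : {p : ℤ × ℤ // p ≠ (0, 0)},
    (1 / (z - latticePt τ p.1) ^ 2 - 1 / (latticePt τ p.1) ^ 2)

/-- The Weierstrass function `℘_m(z;τ)` for `m ≥ 3`. -/
noncomputable def wpHigh (m : ℕ) (z τ : ℂ) : ℂ :=
  ∑' p : ℤ × ℤ, 1 / (z - latticePt τ p) ^ m

/-- The Weierstrass function `℘_m(z;τ)`, `m ≥ 1`. -/
noncomputable def wp (m : ℕ) (z τ : ℂ) : ℂ :=
  if m = 1 then wp1 z τ else if m = 2 then wp2 z τ else wpHigh m z τ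

/-- The Eisenstein series `G_k(τ) = Σ_{(m,l) ≠ (0,0)} (mτ+l)^{-k}` (used for `k ≥ 3`). -/
noncomputable def Eis (k : ℕ) (τ : ℂ) : ℂ :=
  ∑' p : {p : ℤ × ℤ // p ≠ (0, 0)}, 1 / (latticePt τ p.1) ^ k

/-- The quasimodular Eisenstein series
`G₂(τ) = π²/3 + Σ_{m≠0} Σ_{l∈ℤ} (mτ+l)^{-2}` (iterated sum). -/
noncomputable def G2 (τ : ℂ) : ℂ :=
  (Real.pi : ℂ) ^ 2 / 3 +
    ∑' m : {m : ℤ // m ≠ 0}, ∑' l : ℤ, 1 / (((m : ℤ) : ℂ) * τ + (l : ℂ)) ^ 2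

/-- The function `ψ(u,v;τ) = 2πi·∂_τ℘_m(u−v;τ) + m·G₂(τ)·℘_m(u−v;τ)
− m·G₂(τ)·(u−v)·℘_{m+1}(u−v;τ) − m·℘_{m+1}(u−v;τ)·℘₁(v−u;τ)`. -/
noncomputable def psiTheta (m : ℕ) (u v τ : ℂ) : ℂ :=
  2 * Real.pi * Complex.I * deriv (fun s => wp m (u - v) s) τ +
    (m : ℂ) * G2 τ * wp m (u - v) τ -
    (m : ℂ) * G2 τ * (u - v) * wp (m + 1) (u - v) τ -
    (m : ℂ) * wp (m + 1) (u - v) τ * wp1 (v - u) τ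

open Filter Topology

/-- Termwise differentiation of a series of holomorphic functions near a point, where a uniform
summable bound is only required outside a finite set of indices. -/
theorem hasSum_deriv_of_eventually_summable_norm {ι : Type*} {f : ι → ℂ → ℂ} {x : ℂ} {ε : ℝ}
    (hε : 0 < ε) {u : ι → ℝ} (hu : Summable u)
    (hf : ∀ i, ∀ᶠ t in 𝓝 x, DifferentiableAt ℂ (f i) t)
    (hb : ∀ᶠ i in cofinite, ∀ t ∈ Metric.ball x ε, DifferentiableAt ℂ (f i) t ∧ ‖f i t‖ ≤ u i) :
    DifferentiableAt ℂ (fun t => ∑' i, f i t) x ∧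
      HasSum (fun i => deriv (f i) x) (deriv (fun t => ∑' i, f i t) x) := by
  classical
  have hS := eventually_cofinite.mp hb
  set S := {i | ¬ ∀ t ∈ Metric.ball x ε, DifferentiableAt ℂ (f i) t ∧ ‖f i t‖ ≤ u i}
  have hev : ∀ᶠ t in 𝓝 x, ∀ i ∈ S, DifferentiableAt ℂ (f i) t ∧ ‖f i t‖ ≤ ‖f i x‖ + 1 := by
    rw [hS.eventually_all]
    intro i _
    have hc : ContinuousAt (fun t => ‖f i t‖) x := (hf i).self_of_nhds.continuousAt.norm
    filter_upwards [hf i, hc.eventually_lt continuousAt_const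
      (lt_add_one ‖f i x‖)] with t h1 h2 using ⟨h1, h2.le⟩
  obtain ⟨δ, hδ, hball⟩ := Metric.eventually_nhds_iff_ball.mp hev
  have hgood : ∀ i, ∀ t ∈ Metric.ball x (min δ ε), DifferentiableAt ℂ (f i) t ∧
      ‖f i t‖ ≤ if i ∈ S then ‖f i x‖ + 1 else u i := by
    intro i t ht
    by_cases hi : i ∈ S
    · simpa [hi] using hball t (Metric.ball_subset_ball (min_le_left _ _) ht) i hi
    · simpa only [hi, if_false] using
        not_not.mp hi t (Metric.ball_subset_ball (min_le_right _ _) ht)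
  have hu' : Summable fun i => if i ∈ S then ‖f i x‖ + 1 else u i := by
    refine hu.congr_cofinite ?_
    filter_upwards [hS.compl_mem_cofinite] with i hi
    exact (if_neg hi).symm
  have hx : x ∈ Metric.ball x (min δ ε) := Metric.mem_ball_self (lt_min hδ hε)
  have hd : ∀ i, DifferentiableOn ℂ (f i) (Metric.ball x (min δ ε)) :=
    fun i t ht => (hgood i t ht).1.differentiableWithinAt
  exact ⟨(Complex.differentiableOn_tsum_of_summable_norm hu' hd Metric.isOpen_ball
      fun i t ht => (hgood i t ht).2).differentiableAt (Metric.isOpen_ball.mem_nhds hx),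
    Complex.hasSum_deriv_of_summable_norm hu' hd Metric.isOpen_ball
      (fun i t ht => (hgood i t ht).2) hx⟩

theorem norm_int_prod_eq_norm_vec (p : ℤ × ℤ) : ‖p‖ = ‖![p.1, p.2]‖ := by
  rw [EisensteinSeries.norm_eq_max_natAbs, Prod.norm_def]
  simp [Int.norm_eq_abs]

theorem exists_mul_norm_le_norm_latticePt {τ : ℂ} (hτ : 0 < τ.im) :
    ∃ r > 0, ∃ ε > 0, ∀ t ∈ Metric.ball τ ε, ∀ p : ℤ × ℤ, r * ‖p‖ ≤ ‖latticePt t p‖ := by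
  have hB : 0 < τ.im / 2 := by positivity
  refine ⟨EisensteinSeries.r ⟨⟨|τ.re| + τ.im / 2, τ.im / 2⟩, hB⟩, EisensteinSeries.r_pos _,
    τ.im / 2, hB, fun t ht p => ?_⟩
  rw [Metric.mem_ball, dist_eq_norm] at ht
  have hre : |t.re - τ.re| ≤ ‖t - τ‖ := by simpa using Complex.abs_re_le_norm (t - τ)
  have him : |t.im - τ.im| ≤ ‖t - τ‖ := by simpa using Complex.abs_im_le_norm (t - τ)
  have hti : τ.im / 2 ≤ t.im := by linarith [neg_abs_le (t.im - τ.im)]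
  have htr : |t.re| ≤ |τ.re| + τ.im / 2 := by
    have := abs_add_le τ.re (t.re - τ.re)
    rw [add_sub_cancel] at this
    linarith
  by_cases hp : p = 0
  · simp [hp]
  have hz := EisensteinSeries.r_lower_bound_on_verticalStrip ⟨t, hB.trans_le hti⟩ hB ⟨htr, hti⟩
  have hx : ![p.1, p.2] ≠ 0 := by
    contrapose! hp
    exact Prod.ext (congrFun hp 0) (congrFun hp 1)
  have := EisensteinSeries.r_mul_max_le ⟨t, hB.trans_le hti⟩ hx
  rw [norm_int_prod_eq_norm_vec]
  exact (mul_le_mul_of_nonneg_right hz (norm_nonneg _)).trans this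

theorem latticePt_ne_zero {τ : ℂ} (hτ : 0 < τ.im) {p : ℤ × ℤ} (hp : p ≠ 0) :
    latticePt τ p ≠ 0 := by
  obtain ⟨r, hr, ε, hε, h⟩ := exists_mul_norm_le_norm_latticePt hτ
  exact norm_pos_iff.mp ((mul_pos hr (norm_pos_iff.mpr hp)).trans_le
    (h τ (Metric.mem_ball_self hε) p))

theorem summable_inv_norm_int_prod_pow_three : Summable fun p : ℤ × ℤ => (‖p‖ ^ 3)⁻¹ := by
  have h := (finTwoArrowEquiv ℤ).symm.summable_iff.mpr
    (EisensteinSeries.summable_one_div_norm_rpow (k := 3) (by norm_num))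
  refine h.congr fun p => ?_
  rw [norm_int_prod_eq_norm_vec, Function.comp_apply, finTwoArrowEquiv_symm_apply,
    Real.rpow_neg (norm_nonneg _)]
  norm_cast

/-- The summand of `℘_m`, `m ≥ 2`, including the correction term needed when `m = 2`. -/
noncomputable def wpTerm (m : ℕ) (p : ℤ × ℤ) (z τ : ℂ) : ℂ :=
  1 / (z - latticePt τ p) ^ m - if m = 2 then 1 / latticePt τ p ^ 2 else 0

theorem norm_wpTerm_le {m : ℕ} (hm : 2 ≤ m) {p : ℤ × ℤ} {z τ : ℂ} {M R : ℝ} (hz : ‖z‖ ≤ M)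
    (hR : 2 ≤ R) (hMR : 2 * M ≤ R) (hp : R ≤ ‖latticePt τ p‖) :
    ‖wpTerm m p z τ‖ ≤ (8 + 12 * M) / R ^ 3 := by
  have hM : 0 ≤ M := (norm_nonneg z).trans hz
  rw [wpTerm]
  set q := latticePt τ p
  have hzq : ‖q‖ / 2 ≤ ‖z - q‖ := by
    have := norm_sub_norm_le q z
    rw [norm_sub_rev] at this
    linarith
  have hq : 0 < ‖q‖ := by linarith
  have hzq0 : 0 < ‖z - q‖ := by linarith
  rcases hm.eq_or_lt with rfl | hm
  · have hq' := norm_pos_iff.mp hq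
    have hzq' := norm_pos_iff.mp hzq0
    have hid : 1 / (z - q) ^ 2 - 1 / q ^ 2 = z * (2 * q - z) / (q ^ 2 * (z - q) ^ 2) := by
      field_simp
      ring
    have h1 : ‖2 * q - z‖ ≤ 3 * ‖q‖ := by
      refine (norm_sub_le _ _).trans ?_
      rw [norm_mul, Complex.norm_ofNat]
      linarith
    rw [if_pos rfl, hid, norm_div, norm_mul, norm_mul, norm_pow, norm_pow]
    calc ‖z‖ * ‖2 * q - z‖ / (‖q‖ ^ 2 * ‖z - q‖ ^ 2)
        ≤ M * (3 * ‖q‖) / (‖q‖ ^ 2 * (‖q‖ / 2) ^ 2) := by gcongr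
      _ = 12 * M / ‖q‖ ^ 3 := by field_simp; ring
      _ ≤ (8 + 12 * M) / R ^ 3 := by gcongr; linarith
  · rw [if_neg hm.ne', sub_zero, norm_div, norm_one, norm_pow]
    calc 1 / ‖z - q‖ ^ m ≤ 1 / ‖z - q‖ ^ 3 := by
          gcongr
          · linarith
          · exact hm
      _ ≤ 1 / (R / 2) ^ 3 := by gcongr; linarith
      _ = 8 / R ^ 3 := by field_simp; norm_num
      _ ≤ (8 + 12 * M) / R ^ 3 := by gcongr; linarith

theorem exists_summable_bound_wpTerm {m : ℕ} (hm : 2 ≤ m) {τ : ℂ} (hτ : 0 < τ.im) (M : ℝ) :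
    ∃ ε > 0, ∃ u : ℤ × ℤ → ℝ, Summable u ∧ ∀ᶠ p in cofinite, ∀ t ∈ Metric.ball τ ε, ∀ w : ℂ,
      ‖w‖ ≤ M → w ≠ latticePt t p ∧ latticePt t p ≠ 0 ∧ ‖wpTerm m p w t‖ ≤ u p := by
  obtain ⟨r, hr, ε, hε, h⟩ := exists_mul_norm_le_norm_latticePt hτ
  refine ⟨ε, hε, fun p => (8 + 12 * M) / r ^ 3 * (‖p‖ ^ 3)⁻¹,
    summable_inv_norm_int_prod_pow_three.mul_left _, ?_⟩
  have hlim : Tendsto (fun p : ℤ × ℤ => ‖p‖) cofinite atTop :=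
    tendsto_norm_comp_cofinite_atTop_of_isClosedEmbedding IsClosedEmbedding.id
  filter_upwards [hlim.eventually_ge_atTop (2 / r), hlim.eventually_ge_atTop (2 * M / r)]
    with p h1 h2 t ht w hw
  rw [div_le_iff₀' hr] at h1 h2
  have hp := h t ht p
  refine ⟨?_, norm_pos_iff.mp (by linarith), ?_⟩
  · rintro rfl
    linarith
  · refine (norm_wpTerm_le hm hw h1 h2 hp).trans_eq ?_
    rw [mul_pow, div_mul_eq_div_div, div_eq_mul_inv _ (‖p‖ ^ 3)]

theorem summable_wpTerm {m : ℕ} (hm : 2 ≤ m) (z : ℂ) {τ : ℂ} (hτ : 0 < τ.im) :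
    Summable fun p => wpTerm m p z τ := by
  obtain ⟨ε, hε, u, hu, h⟩ := exists_summable_bound_wpTerm hm hτ ‖z‖
  refine hu.of_norm_bounded_eventually (h.mono fun p hp => ?_)
  exact (hp τ (Metric.mem_ball_self hε) z le_rfl).2.2

theorem wp_eq_tsum_wpTerm {m : ℕ} (hm : 2 ≤ m) (z : ℂ) {τ : ℂ} (hτ : 0 < τ.im) :
    wp m z τ = ∑' p, wpTerm m p z τ := by
  rcases hm.eq_or_lt with rfl | hm'
  · have h := (summable_wpTerm le_rfl z hτ).sum_add_tsum_subtype_compl {(0, 0)}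
    have he := (Equiv.subtypeEquivRight fun p : ℤ × ℤ =>
      Finset.notMem_singleton (a := p) (b := (0, 0))).tsum_eq fun p => wpTerm 2 p.1 z τ
    rw [← h, Finset.sum_singleton]
    refine Eq.trans ?_ (congrArg _ he.symm)
    simp [wp, wp2, wpTerm, latticePt]
  · simp [wp, wpHigh, wpTerm, hm'.ne', (show m ≠ 1 by omega)]

theorem hasDerivAt_latticePt (p : ℤ × ℤ) (τ : ℂ) :
    HasDerivAt (fun t => latticePt t p) (p.1 : ℂ) τ := by
  simpa [latticePt] using ((hasDerivAt_id τ).const_mul (p.1 : ℂ)).add_const (p.2 : ℂ)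

theorem differentiableAt_one_div_latticePt_pow (p : ℤ × ℤ) (n : ℕ) {τ : ℂ} (hτ : 0 < τ.im) :
    DifferentiableAt ℂ (fun t => 1 / latticePt t p ^ n) τ := by
  by_cases hp : p = 0
  · simp [hp, latticePt]
  · exact (differentiableAt_const 1).div ((hasDerivAt_latticePt p τ).differentiableAt.pow n)
      (pow_ne_zero n (latticePt_ne_zero hτ hp))

/-- The derivative of a summand of `℘_m` along the affine curve `t ↦ (z + c (t - τ), t)`, split
into a part independent of `c` and a part linear in `c`. -/
theorem hasDerivAt_wpTerm (m : ℕ) (p : ℤ × ℤ) (z c : ℂ) {τ t : ℂ} (ht : 0 < t.im)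
    (h : z + c * (t - τ) ≠ latticePt t p) :
    HasDerivAt (fun s => wpTerm m p (z + c * (s - τ)) s)
      (m * p.1 / (z + c * (t - τ) - latticePt t p) ^ (m + 1) -
        deriv (fun s => if m = 2 then 1 / latticePt s p ^ 2 else 0) t -
        m * c * (1 / (z + c * (t - τ) - latticePt t p) ^ (m + 1))) t := by
  have h0 : z + c * (t - τ) - latticePt t p ≠ 0 := sub_ne_zero.mpr h
  have hlin : HasDerivAt (fun s => z + c * (s - τ)) c t := by
    simpa using (((hasDerivAt_id t).sub_const τ).const_mul c).const_add z
  have hpow := ((hlin.sub (hasDerivAt_latticePt p t)).pow m).fun_inv (pow_ne_zero m h0)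
  have hcorr : DifferentiableAt ℂ (fun s => if m = 2 then 1 / latticePt s p ^ 2 else 0) t := by
    split_ifs
    · exact differentiableAt_one_div_latticePt_pow p 2 ht
    · exact differentiableAt_const 0
  refine ((hpow.sub hcorr.hasDerivAt).congr_deriv ?_).congr_of_eventuallyEq (.of_forall fun s => ?_)
  · rcases m with _ | n
    · simp
    · simp only [Nat.add_sub_cancel, Pi.sub_apply, Pi.pow_apply]
      field_simp
      ring
  · simp [wpTerm]

theorem exists_hasDerivAt_wp {m : ℕ} (hm : 2 ≤ m) {z τ : ℂ} (hτ : 0 < τ.im)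
    (hz : ∀ p : ℤ × ℤ, z ≠ latticePt τ p) :
    ∃ E, ∀ c, HasDerivAt (fun t => wp m (z + c * (t - τ)) t) (E - m * c * wp (m + 1) z τ) τ := by
  have him : ∀ᶠ t : ℂ in 𝓝 τ, 0 < t.im :=
    continuousAt_const.eventually_lt Complex.continuous_im.continuousAt hτ
  have key : ∀ c, DifferentiableAt ℂ (fun t => wp m (z + c * (t - τ)) t) τ ∧
      HasSum (fun p : ℤ × ℤ => m * p.1 / (z - latticePt τ p) ^ (m + 1) -
        deriv (fun s => if m = 2 then 1 / latticePt s p ^ 2 else 0) τ -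
        m * c * (1 / (z - latticePt τ p) ^ (m + 1)))
        (deriv (fun t => wp m (z + c * (t - τ)) t) τ) := by
    intro c
    obtain ⟨ε, hε, u, hu, hb⟩ := exists_summable_bound_wpTerm hm hτ (‖z‖ + ‖c‖ * τ.im)
    have h := hasSum_deriv_of_eventually_summable_norm (x := τ) (u := u)
      (f := fun p t => wpTerm m p (z + c * (t - τ)) t) (lt_min hε hτ) hu ?_ ?_
    · have heq : (fun t => wp m (z + c * (t - τ)) t) =ᶠ[𝓝 τ]
          fun t => ∑' p, wpTerm m p (z + c * (t - τ)) t :=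
        him.mono fun t ht => wp_eq_tsum_wpTerm hm _ ht
      refine ⟨h.1.congr_of_eventuallyEq heq, ?_⟩
      rw [heq.deriv_eq]
      refine h.2.congr_fun fun p => ?_
      rw [(hasDerivAt_wpTerm m p z c hτ (by simpa using hz p)).deriv]
      simp
    · intro p
      have hne : ∀ᶠ t in 𝓝 τ, z + c * (t - τ) ≠ latticePt t p := by
        refine (ContinuousAt.ne_iff_eventually_ne (by fun_prop)
          (hasDerivAt_latticePt p τ).continuousAt).mp ?_
        simpa using hz p
      filter_upwards [him, hne] with t h1 h2 using
        (hasDerivAt_wpTerm m p z c h1 h2).differentiableAt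
    · filter_upwards [hb] with p hp t ht
      have htε := Metric.ball_subset_ball (min_le_left _ _) ht
      have htτ : ‖t - τ‖ < τ.im := by
        simpa [dist_eq_norm] using Metric.ball_subset_ball (min_le_right _ _) ht
      have hti : 0 < t.im := by
        have := (Complex.abs_im_le_norm (t - τ)).trans_lt htτ
        rw [Complex.sub_im] at this
        linarith [neg_abs_le (t.im - τ.im)]
      have hw : ‖z + c * (t - τ)‖ ≤ ‖z‖ + ‖c‖ * τ.im := by
        refine (norm_add_le _ _).trans ?_
        rw [norm_mul]
        gcongr
      obtain ⟨h1, -, h2⟩ := hp t htε _ hw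
      exact ⟨(hasDerivAt_wpTerm m p z c hti h1).differentiableAt, h2⟩
  refine ⟨deriv (fun t => wp m (z + 0 * (t - τ)) t) τ, fun c => ?_⟩
  have hwp : HasSum (fun p => 1 / (z - latticePt τ p) ^ (m + 1)) (wp (m + 1) z τ) := by
    rw [wp_eq_tsum_wpTerm (by omega) z hτ]
    refine (summable_wpTerm (by omega) z hτ).hasSum.congr_fun fun p => ?_
    rw [wpTerm, if_neg (by omega), sub_zero]
  have hsum := (key 0).2.sub (hwp.mul_left (m * c))
  rw [hsum.unique ((key c).2.congr_fun fun p => by ring)]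
  exact (key c).1.hasDerivAt

theorem summable_inv_sq_sub_telescope (z : UpperHalfPlane) :
    Summable fun p : ℤ × ℤ => 1 / ((p.1 : ℂ) * z + p.2) ^ 2 -
      (1 / ((p.1 : ℂ) * z + p.2) - 1 / ((p.1 : ℂ) * z + p.2 + 1)) := by
  have H : Summable fun x : Fin 2 → ℤ =>
      (((x 0 : ℂ) * z + x 1) ^ 2 * ((x 0 : ℂ) * z + x 1 + 1))⁻¹ := by
    apply EisensteinSeries.summable_of_isBigO_rpow_norm (a := 3) (by norm_num)
    simpa [pow_three, pow_two, ← mul_assoc] using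
      ((EisensteinSeries.isBigO_linear_add_const_vec z 0 1).mul
        (EisensteinSeries.isBigO_linear_add_const_vec z 0 0)).mul
          (EisensteinSeries.isBigO_linear_add_const_vec z 0 0)
  refine ((finTwoArrowEquiv ℤ).symm.summable_iff.mpr H).congr_cofinite ?_
  filter_upwards [eventually_cofinite_ne (0, 0), eventually_cofinite_ne (0, -1)] with p h0 h1
  have hq : (p.1 : ℂ) * z + p.2 ≠ 0 := latticePt_ne_zero z.im_pos h0
  have hq1 : (p.1 : ℂ) * z + p.2 + 1 ≠ 0 := by
    have := latticePt_ne_zero z.im_pos (p := (p.1, p.2 + 1)) fun h => h1 (by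
      simp only [Prod.mk_eq_zero] at h
      ext
      · exact h.1
      · exact eq_neg_of_add_eq_zero_left h.2)
    simpa [latticePt, add_assoc] using this
  simp only [Function.comp_apply, finTwoArrowEquiv_symm_apply, Matrix.cons_val_zero,
    Matrix.cons_val_one]
  field_simp
  ring

theorem summable_e2Summand (z : UpperHalfPlane) :
    Summable fun n => EisensteinSeries.e2Summand n z := by
  have hd := summable_inv_sq_sub_telescope z
  refine hd.prod.congr fun n => ?_
  have h0 := EisensteinSeries.tsum_symmetricIco_linear_sub_linear_add_one_eq_zero z n
  have hs := EisensteinSeries.summable_right_one_div_linear_sub_one_div_linear_succ z n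
  rw [tsum_eq_of_summable_unconditional hs] at h0
  rw [← add_zero (∑' l, _), ← h0, EisensteinSeries.e2Summand, ← (hd.prod_factor n).tsum_add hs]
  exact tsum_congr fun l => by simp [EisensteinSeries.eisSummand, zpow_ofNat]

theorem G2_eq_eisensteinSeries_G2 (z : UpperHalfPlane) : G2 z = EisensteinSeries.G2 z := by
  have hs := summable_e2Summand z
  have h := hs.sum_add_tsum_subtype_compl {0}
  rw [EisensteinSeries.G2, tsum_eq_of_summable_unconditional hs, ← h, Finset.sum_singleton,
    EisensteinSeries.e2Summand_zero_eq_two_riemannZeta_two, riemannZeta_two]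
  have he := (Equiv.subtypeEquivRight fun n : ℤ =>
      Finset.notMem_singleton (a := n) (b := 0)).tsum_eq
    fun n => EisensteinSeries.e2Summand n.1 z
  rw [G2]
  refine congrArg₂ _ (by ring) (Eq.trans ?_ he.symm)
  exact tsum_congr fun n => tsum_congr fun l => by
    simp [EisensteinSeries.eisSummand, zpow_ofNat]

theorem moebius_denom_ne_zero (g : Matrix.SpecialLinearGroup (Fin 2) ℤ) {τ : ℂ} (hτ : 0 < τ.im) :
    ((g 1 0 : ℤ) * τ + (g 1 1 : ℤ) : ℂ) ≠ 0 := by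
  have := UpperHalfPlane.denom_ne_zero g ⟨τ, hτ⟩
  rwa [ModularGroup.denom_apply] at this

theorem coe_smul_eq_moebius (g : Matrix.SpecialLinearGroup (Fin 2) ℤ) (z : UpperHalfPlane) :
    ((g • z : UpperHalfPlane) : ℂ) =
      ((g 0 0 : ℤ) * (z : ℂ) + (g 0 1 : ℤ)) / ((g 1 0 : ℤ) * (z : ℂ) + (g 1 1 : ℤ)) := by
  rw [UpperHalfPlane.coe_specialLinearGroup_apply]
  simp

theorem G2_moebius (g : Matrix.SpecialLinearGroup (Fin 2) ℤ) {τ : ℂ} (hτ : 0 < τ.im) :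
    G2 (((g 0 0 : ℤ) * τ + (g 0 1 : ℤ)) / ((g 1 0 : ℤ) * τ + (g 1 1 : ℤ))) =
      ((g 1 0 : ℤ) * τ + (g 1 1 : ℤ)) ^ 2 * G2 τ -
        2 * Real.pi * Complex.I * (g 1 0 : ℤ) * ((g 1 0 : ℤ) * τ + (g 1 1 : ℤ)) := by
  have hj := moebius_denom_ne_zero g hτ
  have h := congrFun (EisensteinSeries.G2_slash_action g) ⟨τ, hτ⟩
  rw [ModularForm.SL_slash_apply, Pi.sub_apply, EisensteinSeries.D2, ModularGroup.denom_apply,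
    ← G2_eq_eisensteinSeries_G2, ← G2_eq_eisensteinSeries_G2, coe_smul_eq_moebius, zpow_neg,
    zpow_ofNat] at h
  change G2 (((g 0 0 : ℤ) * τ + (g 0 1 : ℤ)) / ((g 1 0 : ℤ) * τ + (g 1 1 : ℤ))) * _ = G2 τ - _ at h
  rw [mul_inv_eq_iff_eq_mul₀ (pow_ne_zero 2 hj)] at h
  rw [h]
  change (G2 τ - 2 * Real.pi * Complex.I * (g 1 0 : ℤ) / ((g 1 0 : ℤ) * τ + (g 1 1 : ℤ))) *
    ((g 1 0 : ℤ) * τ + (g 1 1 : ℤ)) ^ 2 = _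
  field_simp

/-- The right action of `SL₂(ℤ)` on row vectors `(k, l)`. -/
def rowActionEquiv (g : Matrix.SpecialLinearGroup (Fin 2) ℤ) : ℤ × ℤ ≃ ℤ × ℤ where
  toFun p := (p.1 * g 0 0 + p.2 * g 1 0, p.1 * g 0 1 + p.2 * g 1 1)
  invFun p := (p.1 * g 1 1 - p.2 * g 1 0, -p.1 * g 0 1 + p.2 * g 0 0)
  left_inv p := by
    have h := g.det_coe
    rw [Matrix.det_fin_two] at h
    ext
    · linear_combination p.1 * h
    · linear_combination p.2 * h
  right_inv p := by
    have h := g.det_coe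
    rw [Matrix.det_fin_two] at h
    ext
    · linear_combination p.1 * h
    · linear_combination p.2 * h

theorem rowActionEquiv_ne_zero_iff (g : Matrix.SpecialLinearGroup (Fin 2) ℤ) (p : ℤ × ℤ) :
    p ≠ (0, 0) ↔ rowActionEquiv g p ≠ (0, 0) := by
  have h : rowActionEquiv g (0, 0) = (0, 0) := by simp [rowActionEquiv]
  rw [← h, (rowActionEquiv g).injective.ne_iff, h]

theorem latticePt_moebius (g : Matrix.SpecialLinearGroup (Fin 2) ℤ) {τ : ℂ}
    (hj : ((g 1 0 : ℤ) * τ + (g 1 1 : ℤ) : ℂ) ≠ 0) (p : ℤ × ℤ) :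
    latticePt (((g 0 0 : ℤ) * τ + (g 0 1 : ℤ)) / ((g 1 0 : ℤ) * τ + (g 1 1 : ℤ))) p =
      latticePt τ (rowActionEquiv g p) / ((g 1 0 : ℤ) * τ + (g 1 1 : ℤ)) := by
  simp only [latticePt, rowActionEquiv, Equiv.coe_fn_mk]
  rw [eq_div_iff hj, add_mul, mul_assoc, div_mul_cancel₀ _ hj]
  push_cast
  ring

theorem wp1_moebius (g : Matrix.SpecialLinearGroup (Fin 2) ℤ) {τ : ℂ}
    (hj : ((g 1 0 : ℤ) * τ + (g 1 1 : ℤ) : ℂ) ≠ 0) (z : ℂ) :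
    wp1 (z / ((g 1 0 : ℤ) * τ + (g 1 1 : ℤ)))
        (((g 0 0 : ℤ) * τ + (g 0 1 : ℤ)) / ((g 1 0 : ℤ) * τ + (g 1 1 : ℤ))) =
      ((g 1 0 : ℤ) * τ + (g 1 1 : ℤ)) * wp1 z τ := by
  simp only [wp1, latticePt_moebius g hj, mul_add, ← tsum_mul_left, ← sub_div]
  generalize ((g 1 0 : ℤ) * τ + (g 1 1 : ℤ) : ℂ) = j at hj
  symm
  rw [← ((rowActionEquiv g).subtypeEquiv (rowActionEquiv_ne_zero_iff g)).tsum_eq]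
  congr 1
  · simp [div_eq_mul_inv, mul_comm]
  · refine tsum_congr fun p => ?_
    simp only [Equiv.subtypeEquiv_apply]
    field_simp

theorem wp2_moebius (g : Matrix.SpecialLinearGroup (Fin 2) ℤ) {τ : ℂ}
    (hj : ((g 1 0 : ℤ) * τ + (g 1 1 : ℤ) : ℂ) ≠ 0) (z : ℂ) :
    wp2 (z / ((g 1 0 : ℤ) * τ + (g 1 1 : ℤ)))
        (((g 0 0 : ℤ) * τ + (g 0 1 : ℤ)) / ((g 1 0 : ℤ) * τ + (g 1 1 : ℤ))) =
      ((g 1 0 : ℤ) * τ + (g 1 1 : ℤ)) ^ 2 * wp2 z τ := by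
  simp only [wp2, latticePt_moebius g hj, mul_add, ← tsum_mul_left, ← sub_div]
  symm
  rw [← ((rowActionEquiv g).subtypeEquiv (rowActionEquiv_ne_zero_iff g)).tsum_eq]
  simp only [Equiv.subtypeEquiv_apply, div_pow, one_div_div, mul_sub, mul_one_div]

theorem wpHigh_moebius (m : ℕ) (g : Matrix.SpecialLinearGroup (Fin 2) ℤ) {τ : ℂ}
    (hj : ((g 1 0 : ℤ) * τ + (g 1 1 : ℤ) : ℂ) ≠ 0) (z : ℂ) :
    wpHigh m (z / ((g 1 0 : ℤ) * τ + (g 1 1 : ℤ)))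
        (((g 0 0 : ℤ) * τ + (g 0 1 : ℤ)) / ((g 1 0 : ℤ) * τ + (g 1 1 : ℤ))) =
      ((g 1 0 : ℤ) * τ + (g 1 1 : ℤ)) ^ m * wpHigh m z τ := by
  simp only [wpHigh, latticePt_moebius g hj, ← tsum_mul_left, ← sub_div]
  symm
  rw [← (rowActionEquiv g).tsum_eq]
  simp only [div_pow, one_div_div, mul_one_div]

theorem wp_moebius (m : ℕ) (g : Matrix.SpecialLinearGroup (Fin 2) ℤ) {τ : ℂ}
    (hj : ((g 1 0 : ℤ) * τ + (g 1 1 : ℤ) : ℂ) ≠ 0) (z : ℂ) :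
    wp m (z / ((g 1 0 : ℤ) * τ + (g 1 1 : ℤ)))
        (((g 0 0 : ℤ) * τ + (g 0 1 : ℤ)) / ((g 1 0 : ℤ) * τ + (g 1 1 : ℤ))) =
      ((g 1 0 : ℤ) * τ + (g 1 1 : ℤ)) ^ m * wp m z τ := by
  unfold wp
  split_ifs with h1 h2
  · rw [wp1_moebius g hj, h1, pow_one]
  · rw [wp2_moebius g hj, h2]
  · exact wpHigh_moebius m g hj z

theorem hasDerivAt_moebius (g : Matrix.SpecialLinearGroup (Fin 2) ℤ) {τ : ℂ}
    (hj : ((g 1 0 : ℤ) * τ + (g 1 1 : ℤ) : ℂ) ≠ 0) :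
    HasDerivAt (fun t : ℂ =>
        ((g 0 0 : ℤ) * t + (g 0 1 : ℤ)) / ((g 1 0 : ℤ) * t + (g 1 1 : ℤ)))
      (1 / ((g 1 0 : ℤ) * τ + (g 1 1 : ℤ)) ^ 2) τ := by
  have hlin (a b : ℂ) : HasDerivAt (fun t : ℂ => a * t + b) a τ := by
    simpa using ((hasDerivAt_id τ).const_mul a).add_const b
  refine ((hlin _ _).div (hlin _ _) hj).congr_deriv ?_
  have h : ((g 0 0 : ℤ) * (g 1 1 : ℤ) - (g 0 1 : ℤ) * (g 1 0 : ℤ) : ℂ) = 1 := by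
    have h := g.det_coe
    rw [Matrix.det_fin_two] at h
    exact_mod_cast h
  congr 1
  linear_combination h

theorem deriv_wp_moebius {m : ℕ} (hm : 2 ≤ m) (g : Matrix.SpecialLinearGroup (Fin 2) ℤ)
    {z τ : ℂ} (hτ : 0 < τ.im) (hz : ∀ p : ℤ × ℤ, z ≠ latticePt τ p) :
    deriv (fun s => wp m (z / ((g 1 0 : ℤ) * τ + (g 1 1 : ℤ))) s)
        (((g 0 0 : ℤ) * τ + (g 0 1 : ℤ)) / ((g 1 0 : ℤ) * τ + (g 1 1 : ℤ))) =
      ((g 1 0 : ℤ) * τ + (g 1 1 : ℤ)) ^ (m + 2) * deriv (fun s => wp m z s) τ +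
        m * (g 1 0 : ℤ) * ((g 1 0 : ℤ) * τ + (g 1 1 : ℤ)) ^ (m + 1) *
          (wp m z τ - z * wp (m + 1) z τ) := by
  have hj := moebius_denom_ne_zero g hτ
  obtain ⟨E, hE⟩ := exists_hasDerivAt_wp hm hτ hz
  have hE0 : deriv (fun s => wp m z s) τ = E := by simpa using (hE 0).deriv
  have him : 0 < (((g 0 0 : ℤ) * τ + (g 0 1 : ℤ)) / ((g 1 0 : ℤ) * τ + (g 1 1 : ℤ)) : ℂ).im := by
    have := (g • (⟨τ, hτ⟩ : UpperHalfPlane)).im_pos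
    rwa [← UpperHalfPlane.coe_im, coe_smul_eq_moebius] at this
  obtain ⟨E', hE'⟩ := exists_hasDerivAt_wp hm him
    (z := z / ((g 1 0 : ℤ) * τ + (g 1 1 : ℤ))) fun p hp => by
      rw [latticePt_moebius g hj, div_left_inj' hj] at hp
      exact hz _ hp
  have hE0' : HasDerivAt (fun s => wp m (z / ((g 1 0 : ℤ) * τ + (g 1 1 : ℤ))) s) E'
      (((g 0 0 : ℤ) * τ + (g 0 1 : ℤ)) / ((g 1 0 : ℤ) * τ + (g 1 1 : ℤ))) := by
    simpa using hE' 0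
  have hcomp := hE0'.comp τ (hasDerivAt_moebius g hj)
  have hlin : HasDerivAt (fun t : ℂ => (g 1 0 : ℤ) * t + (g 1 1 : ℤ)) ((g 1 0 : ℤ) : ℂ) τ := by
    simpa using ((hasDerivAt_id τ).const_mul ((g 1 0 : ℤ) : ℂ)).add_const ((g 1 1 : ℤ) : ℂ)
  have hprod := (hlin.fun_pow m).mul (hE (z * (g 1 0 : ℤ) / ((g 1 0 : ℤ) * τ + (g 1 1 : ℤ))))
  have heq := hcomp.unique (hprod.congr_of_eventuallyEq ?_)
  · rw [hE0'.deriv, hE0]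
    obtain ⟨n, rfl⟩ : ∃ n, m = n + 1 := ⟨m - 1, by omega⟩
    simp only [sub_self, mul_zero, add_zero, Nat.add_sub_cancel] at heq
    field_simp at heq
    rw [heq]
    ring
  · filter_upwards [hlin.continuousAt.eventually_ne hj] with t ht
    have hzt : z / ((g 1 0 : ℤ) * τ + (g 1 1 : ℤ)) =
        (z + z * (g 1 0 : ℤ) / ((g 1 0 : ℤ) * τ + (g 1 1 : ℤ)) * (t - τ)) /
          ((g 1 0 : ℤ) * t + (g 1 1 : ℤ)) := by
      rw [eq_div_iff ht]
      field_simp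
      ring
    simp only [Function.comp_apply, Pi.mul_apply]
    rw [hzt, wp_moebius m g ht]

/-- Modular transformation of weight `m+2` of `ψ = ϑ_j(℘_m(z_j−z_s;·))` (case `j = r`):
for `g = (A B; C D) ∈ SL₂(ℤ)`,
`ψ(u/(Cτ+D), v/(Cτ+D); (Aτ+B)/(Cτ+D)) = (Cτ+D)^{m+2}·ψ(u,v;τ)`. -/
theorem psiTheta_modular (m : ℕ) (hm : 2 ≤ m)
    (g : Matrix.SpecialLinearGroup (Fin 2) ℤ) (τ u v : ℂ) (hτ : 0 < τ.im)
    (huv : ∀ p : ℤ × ℤ, u - v ≠ latticePt τ p) :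
    psiTheta m (u / ((g 1 0 : ℤ) * τ + (g 1 1 : ℤ)))
        (v / ((g 1 0 : ℤ) * τ + (g 1 1 : ℤ)))
        (((g 0 0 : ℤ) * τ + (g 0 1 : ℤ)) / ((g 1 0 : ℤ) * τ + (g 1 1 : ℤ))) =
      ((g 1 0 : ℤ) * τ + (g 1 1 : ℤ)) ^ (m + 2) * psiTheta m u v τ := by
  have hj := moebius_denom_ne_zero g hτ
  simp only [psiTheta, ← sub_div]
  rw [deriv_wp_moebius hm g hτ huv, G2_moebius g hτ, wp_moebius m g hj, wp_moebius (m + 1) g hj,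
    wp1_moebius g hj]
  field_simp
  ring
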